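/- There is an absolute constant c₀ > 0 with the following property. Let A be an n×n real positive semidefinite matrix and N an n×n real matrix such that ‖N‖_F² ≤ η ‖A‖_F² for some 0 < η ≤ 1 and ‖N_{·,j}‖₂² ≤ ‖A_{·,j}‖₂² for every j; assume (A+N)_{jj} > 0 for all j, and set p_j = q_j = (A+N)_{jj}/tr(A+N) and φ = max_j A_{jj}/(A+N)_{jj}. Let 0 < ε < 1, 0 < δ < 1, let k ≥ 1 be an integer, and let t be an integer with t ≥ c₀ · φ · √n · k² · log(n/δ) / ε². Sample indices j₁,…,j_t independently with ℙ(j_l = j) = q_j and, independently, indices i₁,…,i_t independently with ℙ(i_l = i) = p_i. Let T be the n×t matrix with l-th column (1/√(t·q_{j_l}))·e_{j_l} and let S be the t×n matrix with l-th row (1/√(t·p_{i_l}))·e_{i_l}ᵀ. Then with probability at least 1 − δ over both samplings, (AT)ᵀ(AT) − (ε/k)‖A‖_F²·I ⪯ (S A T)ᵀ(S A T) ⪯ (AT)ᵀ(AT) + (ε/k)‖A‖_F²·I in the Loewner order. -/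

import Mathlib

open Matrix

noncomputable def frobeniusSq {m n : ℕ} (M : Matrix (Fin m) (Fin n) ℝ) : ℝ :=
  ∑ i, ∑ j, (M i j)^2

/-- The n×t column-sampling-and-rescaling matrix: its l-th column is
(1/√(t·q(jv l))) times the standard basis vector e_{jv l}. -/
noncomputable def colSample {n : ℕ} (t : ℕ) (q : Fin n → ℝ) (jv : Fin t → Fin n) :
    Matrix (Fin n) (Fin t) ℝ :=
  Matrix.of fun i l => if i = jv l then (Real.sqrt (t * q (jv l)))⁻¹ else 0

/-- Probability, under two independent i.i.d. samples of t indices each (with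
distributions q and p respectively), of the event E. -/
noncomputable def iidProb2 {n : ℕ} (t : ℕ) (q p : Fin n → ℝ)
    (E : Set ((Fin t → Fin n) × (Fin t → Fin n))) : ℝ :=
  ∑ w : (Fin t → Fin n) × (Fin t → Fin n),
    Set.indicator E (fun w => (∏ l, q (w.1 l)) * (∏ l, p (w.2 l))) w

/-- X − c·I ⪯ Y ⪯ X + c·I in the Loewner order. -/
def loewnerBand {d : ℕ} (X Y : Matrix (Fin d) (Fin d) ℝ) (c : ℝ) : Prop :=
  ((X + c • (1 : Matrix (Fin d) (Fin d) ℝ)) - Y).PosSemidef ∧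
  (Y - (X - c • (1 : Matrix (Fin d) (Fin d) ℝ))).PosSemidef

/-!
Write `M = A * T`. Both Gram matrices are compared in Frobenius norm, which dominates the operator
norm: `(S * M)ᵀ * (S * M)` is an average of `t` independent copies of the rank-one matrix
`Mᵢᵀ Mᵢ / qᵢ`, whose mean is `Mᵀ * M`. A Bernstein inequality in Hilbert space, obtained from
Pinelis' supermartingale `cosh ‖·‖`, controls the deviation once `‖Mᵢ‖² ≤ 4 Φ ‖A‖_F² qᵢ` for all `i`
and `‖M‖_F² ≤ 4 ‖A‖_F²`. These two events hold with high probability over `T` by a Chernoff bound,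
whose parameters come from `A i j ^ 2 ≤ A i i * A j j` and `‖A_{i,·}‖² ≤ ‖A‖_F A i i` for positive
semidefinite `A`, together with `A i i ≤ Φ ‖A‖_F qᵢ`, where `Φ = 2 φ √n`.
-/

section IIDSampling

variable {α : Type*} [Fintype α] {t : ℕ} {q : α → ℝ}

/-- The expectation of `f (j₁, …, j_t)` for independent indices `j_l` with law `q`. It is a finite
weighted sum, so it makes sense for any weight function `q`, whether or not it sums to one. -/
noncomputable def iidExp (q : α → ℝ) (f : (Fin t → α) → ℝ) : ℝ :=
  ∑ w, (∏ l, q (w l)) * f w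

/-- The probability of the event `E` for `t` independent indices with law `q`; the one-sample
counterpart of `iidProb2`. -/
noncomputable def iidProb (q : α → ℝ) (E : Set (Fin t → α)) : ℝ :=
  iidExp q (E.indicator 1)

lemma iidExp_mono (hq : ∀ j, 0 ≤ q j) {f g : (Fin t → α) → ℝ} (h : ∀ w, f w ≤ g w) :
    iidExp q f ≤ iidExp q g :=
  Finset.sum_le_sum fun w _ =>
    mul_le_mul_of_nonneg_left (h w) (Finset.prod_nonneg fun l _ => hq (w l))

lemma iidExp_sub (f g : (Fin t → α) → ℝ) :
    iidExp q (fun w => f w - g w) = iidExp q f - iidExp q g := by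
  simp only [iidExp, mul_sub, Finset.sum_sub_distrib]

lemma iidExp_const_mul (c : ℝ) (f : (Fin t → α) → ℝ) :
    iidExp q (fun w => c * f w) = c * iidExp q f := by
  simp only [iidExp, Finset.mul_sum, mul_left_comm]

lemma iidExp_sum {ι : Type*} (s : Finset ι) (f : ι → (Fin t → α) → ℝ) :
    iidExp q (fun w => ∑ i ∈ s, f i w) = ∑ i ∈ s, iidExp q (f i) := by
  simp only [iidExp, Finset.mul_sum]
  exact Finset.sum_comm

lemma iidExp_prod (f : α → ℝ) :
    iidExp q (fun w : Fin t → α => ∏ l, f (w l)) = (∑ j, q j * f j) ^ t := by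
  simp only [iidExp, ← Finset.prod_mul_distrib, Fintype.sum_pow]

lemma iidExp_const (hq : ∑ j, q j = 1) (c : ℝ) : iidExp q (fun _ : Fin t → α => c) = c := by
  rw [iidExp, ← Finset.sum_mul, ← Fintype.sum_pow, hq, one_pow, one_mul]

lemma iidExp_succ (f : (Fin (t + 1) → α) → ℝ) :
    iidExp q f = ∑ j, q j * iidExp q fun w : Fin t → α => f (Fin.cons j w) := by
  simp only [iidExp]
  rw [← Fintype.sum_equiv (Fin.consEquiv fun _ => α) _ _ fun _ => rfl, Fintype.sum_prod_type]
  simp [Fin.consEquiv, Fin.prod_univ_succ, Finset.mul_sum, mul_assoc]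

lemma iidProb_nonneg (hq : ∀ j, 0 ≤ q j) (E : Set (Fin t → α)) : 0 ≤ iidProb q E :=
  Finset.sum_nonneg fun w _ => mul_nonneg (Finset.prod_nonneg fun l _ => hq (w l))
    (Set.indicator_nonneg (fun _ _ => zero_le_one) w)

lemma iidProb_mono (hq : ∀ j, 0 ≤ q j) {E G : Set (Fin t → α)} (h : E ⊆ G) :
    iidProb q E ≤ iidProb q G :=
  iidExp_mono hq fun _ => Set.indicator_le_indicator_of_subset h (fun _ => zero_le_one) _

lemma iidProb_compl (hq : ∑ j, q j = 1) (E : Set (Fin t → α)) :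
    iidProb q Eᶜ = 1 - iidProb q E := by
  calc iidProb q Eᶜ = iidExp q fun w => 1 - E.indicator 1 w := by
        rw [iidProb, Set.indicator_compl]; rfl
    _ = 1 - iidProb q E := by rw [iidExp_sub, iidExp_const hq, iidProb]

lemma iidProb_le_iidExp (hq : ∀ j, 0 ≤ q j) {E : Set (Fin t → α)} {f : (Fin t → α) → ℝ}
    (hf : ∀ w, 0 ≤ f w) (hE : ∀ w ∈ E, 1 ≤ f w) : iidProb q E ≤ iidExp q f :=
  iidExp_mono hq fun w => Set.indicator_apply_le' (hE w) fun _ => hf w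

lemma iidProb_iUnion_le (hq : ∀ j, 0 ≤ q j) {ι : Type*} [Fintype ι] (E : ι → Set (Fin t → α)) :
    iidProb q (⋃ i, E i) ≤ ∑ i, iidProb q (E i) := by
  have indicator_nonneg (i : ι) (w : Fin t → α) : 0 ≤ (E i).indicator (1 : (Fin t → α) → ℝ) w :=
    Set.indicator_nonneg (fun _ _ => zero_le_one) w
  simp only [iidProb, ← iidExp_sum]
  refine iidProb_le_iidExp hq (fun w => Finset.sum_nonneg fun i _ => indicator_nonneg i w) ?_
  intro w hw
  obtain ⟨i, hi⟩ := Set.mem_iUnion.1 hw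
  calc (1 : ℝ) = (E i).indicator 1 w := by rw [Set.indicator_of_mem hi, Pi.one_apply]
    _ ≤ ∑ i, (E i).indicator 1 w :=
        Finset.single_le_sum (fun i _ => indicator_nonneg i w) (Finset.mem_univ i)

lemma iidProb_union_le (hq : ∀ j, 0 ≤ q j) (E G : Set (Fin t → α)) :
    iidProb q (E ∪ G) ≤ iidProb q E + iidProb q G := by
  simpa [Set.union_eq_iUnion, add_comm] using iidProb_iUnion_le hq fun b => cond b E G

end IIDSampling

section TwoSamples

variable {n t : ℕ} {q p : Fin n → ℝ}

lemma iidProb2_eq_iidExp_iidProb (E : Set ((Fin t → Fin n) × (Fin t → Fin n))) :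
    iidProb2 t q p E = iidExp q fun v => iidProb p {w | (v, w) ∈ E} := by
  classical
  simp [iidProb2, iidProb, iidExp, Fintype.sum_prod_type, Set.indicator_apply, Finset.mul_sum]

lemma iidProb2_univ (hq : ∑ j, q j = 1) (hp : ∑ j, p j = 1) :
    iidProb2 t q p Set.univ = 1 := by
  have iidProb_univ : iidProb p (Set.univ : Set (Fin t → Fin n)) = 1 := by
    rw [iidProb, Set.indicator_univ]
    exact iidExp_const hp 1
  rw [iidProb2_eq_iidExp_iidProb]
  simp only [Set.mem_univ, Set.ofPred_true, iidProb_univ, iidExp_const hq]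

lemma one_sub_sub_le_iidProb2 (hq₀ : ∀ j, 0 ≤ q j) (hq₁ : ∑ j, q j = 1) (hp₀ : ∀ j, 0 ≤ p j)
    (hp₁ : ∑ j, p j = 1) {E : Set ((Fin t → Fin n) × (Fin t → Fin n))} {G : Set (Fin t → Fin n)}
    {a b : ℝ} (hb : 0 ≤ b) (hG : iidProb q Gᶜ ≤ a)
    (hE : ∀ v ∈ G, iidProb p {w | (v, w) ∉ E} ≤ b) :
    1 - a - b ≤ iidProb2 t q p E := by
  have le_prob (v : Fin t → Fin n) :
      1 - b - Gᶜ.indicator 1 v ≤ iidProb p {w | (v, w) ∈ E} := by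
    by_cases hv : v ∈ G
    · have compl : iidProb p {w | (v, w) ∉ E} = 1 - iidProb p {w | (v, w) ∈ E} :=
        iidProb_compl hp₁ _
      rw [Set.indicator_of_notMem (by simpa using hv)]
      linarith [hE v hv]
    · rw [Set.indicator_of_mem hv, Pi.one_apply]
      linarith [iidProb_nonneg hp₀ {w | (v, w) ∈ E}]
  calc 1 - a - b ≤ 1 - b - iidProb q Gᶜ := by linarith
    _ = iidExp q fun v => 1 - b - Gᶜ.indicator 1 v := by
        rw [iidExp_sub, iidExp_const hq₁, iidProb]
    _ ≤ iidExp q fun v => iidProb p {w | (v, w) ∈ E} := iidExp_mono hq₀ le_prob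
    _ = iidProb2 t q p E := (iidProb2_eq_iidExp_iidProb E).symm

end TwoSamples

section Chernoff

variable {α : Type*} [Fintype α] {t : ℕ} {q : α → ℝ}

lemma iidExp_exp_sum_le (hq₀ : ∀ j, 0 ≤ q j) (hq₁ : ∑ j, q j = 1) {X : α → ℝ}
    (hX₀ : ∀ j, 0 ≤ X j) (hX₁ : ∀ j, X j ≤ 1) :
    iidExp q (fun w : Fin t → α => Real.exp (∑ l, X (w l))) ≤
      Real.exp (2 * (t * ∑ j, q j * X j)) := by
  have exp_le (j : α) : Real.exp (X j) ≤ 1 + 2 * X j := by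
    have taylor := (le_abs_self _).trans
      (Real.abs_exp_sub_one_sub_id_le (abs_le.2 ⟨by linarith [hX₀ j], hX₁ j⟩))
    nlinarith [hX₀ j, hX₁ j]
  have mean_exp_le : ∑ j, q j * Real.exp (X j) ≤ Real.exp (2 * ∑ j, q j * X j) :=
    calc ∑ j, q j * Real.exp (X j) ≤ ∑ j, q j * (1 + 2 * X j) :=
          Finset.sum_le_sum fun j _ => mul_le_mul_of_nonneg_left (exp_le j) (hq₀ j)
      _ = 2 * ∑ j, q j * X j + 1 := by
          simp only [mul_add, mul_one, Finset.sum_add_distrib, hq₁, mul_left_comm _ (2 : ℝ),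
            ← Finset.mul_sum, add_comm]
      _ ≤ Real.exp (2 * ∑ j, q j * X j) := Real.add_one_le_exp _
  calc iidExp q (fun w : Fin t → α => Real.exp (∑ l, X (w l)))
      = (∑ j, q j * Real.exp (X j)) ^ t := by
        simp only [Real.exp_sum]
        exact iidExp_prod fun j => Real.exp (X j)
    _ ≤ Real.exp (2 * ∑ j, q j * X j) ^ t :=
        pow_le_pow_left₀ (Finset.sum_nonneg fun j _ => mul_nonneg (hq₀ j) (Real.exp_pos _).le)
          mean_exp_le t
    _ = Real.exp (2 * (t * ∑ j, q j * X j)) := by rw [← Real.exp_nat_mul]; ring_nf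

lemma iidProb_four_mul_le_sum_le (hq₀ : ∀ j, 0 ≤ q j) (hq₁ : ∑ j, q j = 1) {X : α → ℝ} {L m : ℝ}
    (hL : 0 < L) (hX₀ : ∀ j, 0 ≤ X j) (hX₁ : ∀ j, X j ≤ L) (hm : ∑ j, q j * X j ≤ m) :
    iidProb q {w : Fin t → α | 4 * (t * m) ≤ ∑ l, X (w l)} ≤ Real.exp (-(2 * (t * m / L))) := by
  have scaled_mean_le : ∑ j, q j * (X j / L) ≤ m / L := by
    simp only [← mul_div_assoc, ← Finset.sum_div]
    gcongr
  calc iidProb q {w : Fin t → α | 4 * (t * m) ≤ ∑ l, X (w l)}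
      ≤ iidExp q fun w => Real.exp (-(4 * (t * m / L))) * Real.exp (∑ l, X (w l) / L) := by
        refine iidProb_le_iidExp hq₀ (fun w => by positivity) fun w hw => ?_
        rw [← Real.exp_add, ← Finset.sum_div, Real.one_le_exp_iff]
        have := div_le_div_of_nonneg_right (Set.mem_ofPred_eq ▸ hw) hL.le
        linarith [mul_div_assoc 4 (t * m) L]
    _ ≤ Real.exp (-(4 * (t * m / L))) * Real.exp (2 * (t * (m / L))) := by
        rw [iidExp_const_mul]
        gcongr
        refine (iidExp_exp_sum_le hq₀ hq₁ (fun j => div_nonneg (hX₀ j) hL.le)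
          fun j => (div_le_one hL).2 (hX₁ j)).trans ?_
        gcongr
    _ = Real.exp (-(2 * (t * m / L))) := by rw [← Real.exp_add]; ring_nf

end Chernoff

section HilbertBernstein

lemma convexOn_cosh_sqrt : ConvexOn ℝ (Set.Ici 0) fun s => Real.cosh √s := by
  have hasSum_cosh_sqrt {s : ℝ} (hs : 0 ≤ s) :
      HasSum (fun k : ℕ => s ^ k / (2 * k).factorial) (Real.cosh √s) := by
    simpa [pow_mul, Real.sq_sqrt hs] using Real.hasSum_cosh √s
  refine ⟨convex_Ici 0, fun a ha b hb u v hu hv huv => ?_⟩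
  refine hasSum_le (fun k => ?_) (hasSum_cosh_sqrt ((convex_Ici 0) ha hb hu hv huv))
    (((hasSum_cosh_sqrt ha).mul_left u).add ((hasSum_cosh_sqrt hb).mul_left v))
  calc (u • a + v • b) ^ k / (2 * k).factorial
      ≤ (u • a ^ k + v • b ^ k) / (2 * k).factorial := by
        gcongr
        exact (convexOn_pow k).2 ha hb hu hv huv
    _ = u * (a ^ k / (2 * k).factorial) + v * (b ^ k / (2 * k).factorial) := by
        simp only [smul_eq_mul]; ring

lemma cosh_add_le (x y : ℝ) :
    Real.cosh (x + y) ≤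
      Real.cosh x + y * Real.sinh x + (Real.exp |y| - 1 - |y|) * Real.cosh x := by
  have abs_sinh_le : |Real.sinh x| ≤ Real.cosh x := by
    rw [Real.abs_sinh, ← Real.cosh_abs]
    exact (Real.sinh_lt_cosh _).le
  have abs_sinh_sub : |Real.sinh y - y| = Real.sinh |y| - |y| := by
    rcases le_total 0 y with hy | hy
    · rw [abs_of_nonneg (sub_nonneg.2 (Real.self_le_sinh_iff.2 hy)), abs_of_nonneg hy]
    · rw [abs_of_nonpos (sub_nonpos.2 (Real.sinh_le_self_iff.2 hy)), abs_of_nonpos hy,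
        Real.sinh_neg]
      ring
  have cross_le : Real.sinh x * (Real.sinh y - y) ≤ Real.cosh x * (Real.sinh |y| - |y|) := by
    rw [← abs_sinh_sub]
    exact (le_abs_self _).trans ((abs_mul _ _).trans_le
      (mul_le_mul_of_nonneg_right abs_sinh_le (abs_nonneg _)))
  rw [Real.cosh_add, ← Real.cosh_add_sinh |y|, Real.cosh_abs]
  linarith

variable {E : Type*} [NormedAddCommGroup E] [InnerProductSpace ℝ E]

-- `‖x + y‖ ^ 2` is the convex combination of `(‖x‖ + ‖y‖) ^ 2` and `(‖x‖ - ‖y‖) ^ 2` with the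
-- weights `u` and `v`, which reduces the claim to the scalar case along the line through `x`.
lemma cosh_norm_add_le (x y : E) :
    Real.cosh ‖x + y‖ ≤ Real.cosh ‖x‖ + Real.sinh ‖x‖ / ‖x‖ * inner ℝ x y +
      (Real.exp ‖y‖ - 1 - ‖y‖) * Real.cosh ‖x‖ := by
  rcases eq_or_ne x 0 with rfl | hx
  · simpa using cosh_add_le 0 ‖y‖
  rcases eq_or_ne y 0 with rfl | hy
  · simp
  have inner_bound := abs_le.1 (abs_real_inner_le_norm x y)
  set c : ℝ := inner ℝ x y
  set u := (‖x‖ * ‖y‖ + c) / (2 * (‖x‖ * ‖y‖)) with hu_def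
  set v := (‖x‖ * ‖y‖ - c) / (2 * (‖x‖ * ‖y‖)) with hv_def
  have hu : 0 ≤ u := div_nonneg (by linarith) (by positivity)
  have hv : 0 ≤ v := div_nonneg (by linarith) (by positivity)
  have huv : u + v = 1 := by rw [hu_def, hv_def]; field_simp; ring
  have huv_inner : (u - v) * ‖y‖ = c / ‖x‖ := by rw [hu_def, hv_def]; field_simp; ring
  have norm_sq_eq : u * (‖x‖ + ‖y‖) ^ 2 + v * (‖x‖ + -‖y‖) ^ 2 = ‖x + y‖ ^ 2 := by
    rw [norm_add_sq_real, hu_def, hv_def]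
    field_simp
    ring
  have convexity := convexOn_cosh_sqrt.2 (sq_nonneg (‖x‖ + ‖y‖)) (sq_nonneg (‖x‖ + -‖y‖)) hu hv huv
  simp only [smul_eq_mul, norm_sq_eq, Real.sqrt_sq_eq_abs, Real.cosh_abs] at convexity
  have plus := mul_le_mul_of_nonneg_left (cosh_add_le ‖x‖ ‖y‖) hu
  have minus := mul_le_mul_of_nonneg_left (cosh_add_le ‖x‖ (-‖y‖)) hv
  rw [abs_neg, abs_norm] at minus
  rw [abs_norm] at plus
  calc Real.cosh ‖x + y‖
      ≤ (u + v) * Real.cosh ‖x‖ + (u - v) * ‖y‖ * Real.sinh ‖x‖ +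
          (u + v) * ((Real.exp ‖y‖ - 1 - ‖y‖) * Real.cosh ‖x‖) := by linarith
    _ = Real.cosh ‖x‖ + Real.sinh ‖x‖ / ‖x‖ * c + (Real.exp ‖y‖ - 1 - ‖y‖) * Real.cosh ‖x‖ := by
        rw [huv, huv_inner]; ring

variable {α : Type*} [Fintype α] {t : ℕ} {q : α → ℝ}

lemma sum_mul_cosh_norm_add_le (hq₀ : ∀ j, 0 ≤ q j) (hq₁ : ∑ j, q j = 1) {Y : α → E}
    (hY₀ : ∑ j, q j • Y j = 0) (hY₁ : ∀ j, ‖Y j‖ ≤ 1) (x : E) :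
    ∑ j, q j * Real.cosh ‖x + Y j‖ ≤ Real.exp (∑ j, q j * ‖Y j‖ ^ 2) * Real.cosh ‖x‖ := by
  have step (j : α) : Real.cosh ‖x + Y j‖ ≤
      Real.cosh ‖x‖ + Real.sinh ‖x‖ / ‖x‖ * inner ℝ x (Y j) + ‖Y j‖ ^ 2 * Real.cosh ‖x‖ := by
    have taylor := (le_abs_self _).trans
      (Real.abs_exp_sub_one_sub_id_le (x := ‖Y j‖) (by simpa using hY₁ j))
    refine (cosh_norm_add_le x (Y j)).trans ?_
    gcongr
  have mean_inner : ∑ j, q j * inner ℝ x (Y j) = 0 := by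
    simp only [← real_inner_smul_right, ← inner_sum, hY₀, inner_zero_right]
  calc ∑ j, q j * Real.cosh ‖x + Y j‖
      ≤ ∑ j, q j * (Real.cosh ‖x‖ + Real.sinh ‖x‖ / ‖x‖ * inner ℝ x (Y j) +
          ‖Y j‖ ^ 2 * Real.cosh ‖x‖) :=
        Finset.sum_le_sum fun j _ => mul_le_mul_of_nonneg_left (step j) (hq₀ j)
    _ = (∑ j, q j) * Real.cosh ‖x‖ + Real.sinh ‖x‖ / ‖x‖ * ∑ j, q j * inner ℝ x (Y j) +
          (∑ j, q j * ‖Y j‖ ^ 2) * Real.cosh ‖x‖ := by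
        simp only [Finset.sum_mul, Finset.mul_sum, ← Finset.sum_add_distrib]
        exact Finset.sum_congr rfl fun j _ => by ring
    _ = (∑ j, q j * ‖Y j‖ ^ 2 + 1) * Real.cosh ‖x‖ := by rw [hq₁, mean_inner]; ring
    _ ≤ Real.exp (∑ j, q j * ‖Y j‖ ^ 2) * Real.cosh ‖x‖ :=
        mul_le_mul_of_nonneg_right (Real.add_one_le_exp _) (Real.cosh_pos _).le

lemma iidExp_cosh_norm_add_sum_le (hq₀ : ∀ j, 0 ≤ q j) (hq₁ : ∑ j, q j = 1) {Y : α → E}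
    (hY₀ : ∑ j, q j • Y j = 0) (hY₁ : ∀ j, ‖Y j‖ ≤ 1) (x : E) :
    iidExp q (fun w : Fin t → α => Real.cosh ‖x + ∑ l, Y (w l)‖) ≤
      Real.exp (t * ∑ j, q j * ‖Y j‖ ^ 2) * Real.cosh ‖x‖ := by
  set v := ∑ j, q j * ‖Y j‖ ^ 2
  induction t generalizing x with
  | zero => simp [iidExp]
  | succ t ih =>
    calc iidExp q (fun w : Fin (t + 1) → α => Real.cosh ‖x + ∑ l, Y (w l)‖)
        = ∑ j, q j * iidExp q fun w : Fin t → α => Real.cosh ‖x + Y j + ∑ l, Y (w l)‖ := by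
          simp only [iidExp_succ, Fin.sum_univ_succ, Fin.cons_zero, Fin.cons_succ, add_assoc]
      _ ≤ ∑ j, q j * (Real.exp (t * v) * Real.cosh ‖x + Y j‖) :=
          Finset.sum_le_sum fun j _ => mul_le_mul_of_nonneg_left (ih (x + Y j)) (hq₀ j)
      _ = Real.exp (t * v) * ∑ j, q j * Real.cosh ‖x + Y j‖ := by
          simp only [Finset.mul_sum, mul_left_comm]
      _ ≤ Real.exp (t * v) * (Real.exp v * Real.cosh ‖x‖) := by
          gcongr
          exact sum_mul_cosh_norm_add_le hq₀ hq₁ hY₀ hY₁ x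
      _ = Real.exp ((t + 1 : ℕ) * v) * Real.cosh ‖x‖ := by
          rw [← mul_assoc, ← Real.exp_add]; push_cast; ring_nf

lemma sum_mul_norm_sub_mean_sq_le (hq₁ : ∑ j, q j = 1) (X : α → E) :
    ∑ j, q j * ‖X j - ∑ i, q i • X i‖ ^ 2 ≤ ∑ j, q j * ‖X j‖ ^ 2 := by
  set μ := ∑ i, q i • X i with hμ
  have expand (j : α) : q j * ‖X j - μ‖ ^ 2 =
      q j * ‖X j‖ ^ 2 - 2 * inner ℝ (q j • X j) μ + q j * ‖μ‖ ^ 2 := by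
    rw [norm_sub_sq_real, real_inner_smul_left]; ring
  have sum_inner_eq : ∑ j, inner ℝ (q j • X j) μ = ‖μ‖ ^ 2 := by
    rw [← sum_inner, ← hμ, real_inner_self_eq_norm_sq]
  simp only [expand, Finset.sum_add_distrib, Finset.sum_sub_distrib, ← Finset.mul_sum,
    ← Finset.sum_mul, sum_inner_eq, hq₁]
  linarith [sq_nonneg ‖μ‖]

lemma norm_sum_smul_le (hq₀ : ∀ j, 0 ≤ q j) (hq₁ : ∑ j, q j = 1) {X : α → E} {L : ℝ}
    (hX : ∀ j, ‖X j‖ ≤ L) : ‖∑ j, q j • X j‖ ≤ L := by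
  simpa using (convex_closedBall (0 : E) L).sum_mem (fun j _ => hq₀ j) hq₁
    fun j _ => mem_closedBall_zero_iff.2 (hX j)

lemma exp_le_two_mul_cosh {x y : ℝ} (h : x ≤ y) : Real.exp x ≤ 2 * Real.cosh y := by
  rw [Real.cosh_eq]
  linarith [Real.exp_le_exp.2 h, Real.exp_pos (-y)]

lemma iidProb_le_norm_sum_le (hq₀ : ∀ j, 0 ≤ q j) (hq₁ : ∑ j, q j = 1) {Y : α → E}
    (hY₀ : ∑ j, q j • Y j = 0) (hY₁ : ∀ j, ‖Y j‖ ≤ 1) (s : ℝ) :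
    iidProb q {w : Fin t → α | s ≤ ‖∑ l, Y (w l)‖} ≤
      2 * Real.exp (t * (∑ j, q j * ‖Y j‖ ^ 2) - s) :=
  calc iidProb q {w : Fin t → α | s ≤ ‖∑ l, Y (w l)‖}
      ≤ iidExp q fun w => 2 * Real.exp (-s) * Real.cosh ‖0 + ∑ l, Y (w l)‖ := by
        refine iidProb_le_iidExp hq₀
          (fun w => mul_nonneg (by positivity) (Real.cosh_pos _).le) fun w hw => ?_
        rw [zero_add, mul_right_comm, Real.exp_neg, ← div_eq_mul_inv, one_le_div (Real.exp_pos _)]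
        exact exp_le_two_mul_cosh hw
    _ ≤ 2 * Real.exp (-s) * (Real.exp (t * ∑ j, q j * ‖Y j‖ ^ 2) * Real.cosh ‖(0 : E)‖) := by
        rw [iidExp_const_mul]
        gcongr
        exact iidExp_cosh_norm_add_sum_le hq₀ hq₁ hY₀ hY₁ 0
    _ = 2 * Real.exp (t * (∑ j, q j * ‖Y j‖ ^ 2) - s) := by
        rw [norm_zero, Real.cosh_zero, mul_one, mul_assoc, ← Real.exp_add, neg_add_eq_sub]

lemma iidProb_le_norm_average_sub_mean_le (ht : 0 < t) (hq₀ : ∀ j, 0 ≤ q j)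
    (hq₁ : ∑ j, q j = 1) {X : α → E} {L V c r : ℝ} (hX : ∀ j, ‖X j‖ ≤ L)
    (hV : ∑ j, q j * ‖X j‖ ^ 2 ≤ V) (hc : 0 ≤ c) (hcL : c * (2 * L) ≤ t) :
    iidProb q {w : Fin t → α | r ≤ ‖(t : ℝ)⁻¹ • ∑ l, X (w l) - ∑ j, q j • X j‖} ≤
      2 * Real.exp (c ^ 2 * V / t - c * r) := by
  have ht' : (0 : ℝ) < t := by exact_mod_cast ht
  set μ := ∑ j, q j • X j with hμ
  set Y : α → E := fun j => (c / t) • (X j - μ) with hY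
  have norm_Y (j : α) : ‖Y j‖ = c / t * ‖X j - μ‖ := by
    rw [hY, norm_smul, Real.norm_of_nonneg (by positivity)]
  have mean_Y : ∑ j, q j • Y j = 0 := by
    simp only [hY, smul_comm _ (c / t), ← Finset.smul_sum, smul_sub, Finset.sum_sub_distrib,
      ← Finset.sum_smul, hq₁, one_smul, ← hμ, sub_self]
  have norm_Y_le_one (j : α) : ‖Y j‖ ≤ 1 :=
    calc ‖Y j‖ ≤ c / t * (L + L) := by
          rw [norm_Y]
          gcongr
          exact (norm_sub_le _ _).trans (add_le_add (hX j) (norm_sum_smul_le hq₀ hq₁ hX))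
      _ = c * (2 * L) / t := by ring
      _ ≤ 1 := (div_le_one ht').2 hcL
  have variance_le : t * ∑ j, q j * ‖Y j‖ ^ 2 ≤ c ^ 2 * V / t :=
    calc t * ∑ j, q j * ‖Y j‖ ^ 2 = c ^ 2 / t * ∑ j, q j * ‖X j - μ‖ ^ 2 := by
          simp only [norm_Y, Finset.mul_sum]
          exact Finset.sum_congr rfl fun j _ => by field_simp
      _ ≤ c ^ 2 / t * V := by
          gcongr
          exact (sum_mul_norm_sub_mean_sq_le hq₁ X).trans hV
      _ = c ^ 2 * V / t := by ring
  have sum_Y (w : Fin t → α) : ∑ l, Y (w l) = c • ((t : ℝ)⁻¹ • ∑ l, X (w l) - μ) := by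
    simp only [hY, ← Finset.smul_sum, Finset.sum_sub_distrib, Finset.sum_const, Finset.card_univ,
      Fintype.card_fin, ← Nat.cast_smul_eq_nsmul ℝ, smul_sub, smul_smul, div_eq_mul_inv]
    rw [inv_mul_cancel_right₀ ht'.ne']
  refine (iidProb_mono hq₀ fun w hw => ?_).trans
    ((iidProb_le_norm_sum_le hq₀ hq₁ mean_Y norm_Y_le_one (c * r)).trans (by gcongr))
  rw [Set.mem_ofPred_eq, sum_Y, norm_smul, Real.norm_of_nonneg hc]
  exact mul_le_mul_of_nonneg_left hw hc

end HilbertBernstein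

section Frobenius

variable {m n : ℕ}

lemma frobeniusSq_nonneg (M : Matrix (Fin m) (Fin n) ℝ) : 0 ≤ frobeniusSq M :=
  Finset.sum_nonneg fun _ _ => Finset.sum_nonneg fun _ _ => sq_nonneg _

lemma frobeniusSq_eq_zero_iff {M : Matrix (Fin m) (Fin n) ℝ} : frobeniusSq M = 0 ↔ M = 0 := by
  simp [frobeniusSq, Finset.sum_eq_zero_iff_of_nonneg, Finset.sum_nonneg, sq_nonneg,
    ← Matrix.ext_iff]

lemma frobeniusSq_neg (M : Matrix (Fin m) (Fin n) ℝ) : frobeniusSq (-M) = frobeniusSq M := by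
  simp [frobeniusSq]

lemma frobeniusSq_pos {M : Matrix (Fin m) (Fin n) ℝ} (hM : M ≠ 0) : 0 < frobeniusSq M :=
  (frobeniusSq_nonneg M).lt_of_ne' (frobeniusSq_eq_zero_iff.not.2 hM)

/-- Vectorization of matrices, as a linear map into the Euclidean space whose norm is the Frobenius
norm; it makes Hilbert space inequalities applicable to matrices. -/
noncomputable def frobeniusVec :
    Matrix (Fin m) (Fin n) ℝ →ₗ[ℝ] EuclideanSpace ℝ (Fin n × Fin m) where
  toFun M := WithLp.toLp 2 M.vec
  map_add' _ _ := rfl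
  map_smul' _ _ := rfl

lemma norm_frobeniusVec_sq (M : Matrix (Fin m) (Fin n) ℝ) :
    ‖frobeniusVec M‖ ^ 2 = frobeniusSq M := by
  simp only [EuclideanSpace.norm_sq_eq, Fintype.sum_prod_type_right, frobeniusSq, frobeniusVec,
    Real.norm_eq_abs, sq_abs]
  rfl

lemma frobeniusSq_vecMulVec (u : Fin m → ℝ) (v : Fin n → ℝ) :
    frobeniusSq (Matrix.vecMulVec u v) = (∑ i, u i ^ 2) * ∑ j, v j ^ 2 := by
  simp only [frobeniusSq, Matrix.vecMulVec_apply, mul_pow, Finset.sum_mul_sum]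

lemma dotProduct_mulVec_sq_le (M : Matrix (Fin m) (Fin n) ℝ) (u : Fin m → ℝ) (v : Fin n → ℝ) :
    (u ⬝ᵥ M *ᵥ v) ^ 2 ≤ frobeniusSq M * ((∑ i, u i ^ 2) * ∑ j, v j ^ 2) :=
  calc (u ⬝ᵥ M *ᵥ v) ^ 2 ≤ (∑ i, u i ^ 2) * ∑ i, (M *ᵥ v) i ^ 2 :=
        Finset.sum_mul_sq_le_sq_mul_sq _ _ _
    _ ≤ (∑ i, u i ^ 2) * ∑ i, (∑ j, M i j ^ 2) * ∑ j, v j ^ 2 := by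
        gcongr with i
        exact Finset.sum_mul_sq_le_sq_mul_sq Finset.univ (M i) v
    _ = frobeniusSq M * ((∑ i, u i ^ 2) * ∑ j, v j ^ 2) := by
        rw [← Finset.sum_mul, frobeniusSq]; ring

lemma dotProduct_mulVec_self_le {M : Matrix (Fin n) (Fin n) ℝ} {c : ℝ} (hc : 0 ≤ c)
    (hM : frobeniusSq M ≤ c ^ 2) (u : Fin n → ℝ) : u ⬝ᵥ M *ᵥ u ≤ c * ∑ i, u i ^ 2 := by
  have sum_sq_nonneg : 0 ≤ ∑ i, u i ^ 2 := Finset.sum_nonneg fun _ _ => sq_nonneg _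
  refine le_of_sq_le_sq ?_ (mul_nonneg hc sum_sq_nonneg)
  calc (u ⬝ᵥ M *ᵥ u) ^ 2 ≤ frobeniusSq M * ((∑ i, u i ^ 2) * ∑ i, u i ^ 2) :=
        dotProduct_mulVec_sq_le M u u
    _ ≤ c ^ 2 * ((∑ i, u i ^ 2) * ∑ i, u i ^ 2) := by gcongr
    _ = (c * ∑ i, u i ^ 2) ^ 2 := by ring

lemma posSemidef_smul_one_sub {M : Matrix (Fin n) (Fin n) ℝ} {c : ℝ} (hM : M.IsHermitian)
    (hc : 0 ≤ c) (hMc : frobeniusSq M ≤ c ^ 2) :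
    (c • (1 : Matrix (Fin n) (Fin n) ℝ) - M).PosSemidef := by
  refine .of_dotProduct_mulVec_nonneg ((Matrix.isHermitian_one.smul (star_trivial c)).sub hM)
    fun u => ?_
  have quadratic_le := dotProduct_mulVec_self_le hc hMc u
  have one_term : c * (u ⬝ᵥ u) = c * ∑ i, u i ^ 2 := by simp only [dotProduct, sq]
  rw [star_trivial, Matrix.sub_mulVec, Matrix.smul_mulVec, Matrix.one_mulVec, dotProduct_sub,
    dotProduct_smul, smul_eq_mul, one_term]
  linarith

lemma loewnerBand_of_frobeniusSq_sub_le {X Y : Matrix (Fin n) (Fin n) ℝ} {c : ℝ}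
    (hX : X.IsHermitian) (hY : Y.IsHermitian) (hc : 0 ≤ c) (h : frobeniusSq (Y - X) ≤ c ^ 2) :
    loewnerBand X Y c := by
  constructor
  · convert posSemidef_smul_one_sub (hY.sub hX) hc h using 1
    abel
  · convert posSemidef_smul_one_sub (hX.sub hY) hc (by rwa [← neg_sub, frobeniusSq_neg]) using 1
    abel

end Frobenius

section PosSemidef

variable {ι : Type*} {B : Matrix ι ι ℝ} {n : ℕ} {A : Matrix (Fin n) (Fin n) ℝ}

lemma posSemidef_apply_comm (hB : B.PosSemidef) (i j : ι) : B i j = B j i := by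
  simpa using hB.isHermitian.apply j i

lemma posSemidef_dotProduct_mulVec_sq_le [Fintype ι] (hB : B.PosSemidef) (u v : ι → ℝ) :
    (u ⬝ᵥ B *ᵥ v) ^ 2 ≤ (u ⬝ᵥ B *ᵥ u) * (v ⬝ᵥ B *ᵥ v) := by
  classical
  have symm : v ⬝ᵥ B *ᵥ u = u ⬝ᵥ B *ᵥ v := by
    rw [dotProduct_comm, ← vecMul_transpose, ← dotProduct_mulVec,
      show Bᵀ = B from hB.isHermitian]
  simpa only [Matrix.toBilin'_apply', symm, ← sq] using
    (Matrix.toBilin' B).apply_mul_apply_le_of_forall_zero_le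
      (fun x => by simpa [Matrix.toBilin'_apply'] using hB.dotProduct_mulVec_nonneg x) u v

lemma posSemidef_apply_sq_le [Finite ι] (hB : B.PosSemidef) (i j : ι) :
    B i j ^ 2 ≤ B i i * B j j := by
  classical
  have := Fintype.ofFinite ι
  simpa using posSemidef_dotProduct_mulVec_sq_le hB (Pi.single i 1) (Pi.single j 1)

lemma posSemidef_sum_row_sq_le (hA : A.PosSemidef) (i : Fin n) :
    ∑ j, A i j ^ 2 ≤ √(frobeniusSq A) * A i i := by
  set s := ∑ j, A i j ^ 2 with hs
  have hs₀ : 0 ≤ s := Finset.sum_nonneg fun _ _ => sq_nonneg _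
  have dot_eq : A i ⬝ᵥ A *ᵥ Pi.single i 1 = s := by
    simp [dotProduct, hs, sq, posSemidef_apply_comm hA _ i]
  have quadratic_le : A i ⬝ᵥ A *ᵥ A i ≤ √(frobeniusSq A) * s :=
    dotProduct_mulVec_self_le (Real.sqrt_nonneg _) (Real.sq_sqrt (frobeniusSq_nonneg A)).ge _
  have sq_le : s * s ≤ √(frobeniusSq A) * A i i * s :=
    calc s * s = (A i ⬝ᵥ A *ᵥ Pi.single i 1) ^ 2 := by rw [dot_eq, sq]
      _ ≤ (A i ⬝ᵥ A *ᵥ A i) * A i i := by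
          simpa using posSemidef_dotProduct_mulVec_sq_le hA (A i) (Pi.single i 1)
      _ ≤ √(frobeniusSq A) * s * A i i := mul_le_mul_of_nonneg_right quadratic_le hA.diag_nonneg
      _ = √(frobeniusSq A) * A i i * s := mul_right_comm _ _ _
  rcases hs₀.eq_or_lt with hs₀ | hs₀
  · rw [← hs₀]
    exact mul_nonneg (Real.sqrt_nonneg _) hA.diag_nonneg
  · exact le_of_mul_le_mul_right sq_le hs₀

lemma posSemidef_sqrt_frobeniusSq_le_trace (hA : A.PosSemidef) : √(frobeniusSq A) ≤ A.trace := by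
  refine Real.sqrt_le_iff.2 ⟨hA.trace_nonneg, ?_⟩
  rw [sq, Matrix.trace, Finset.sum_mul_sum]
  exact Finset.sum_le_sum fun i _ => Finset.sum_le_sum fun j _ => posSemidef_apply_sq_le hA i j

end PosSemidef

section Sampling

variable {m n t : ℕ} {q : Fin n → ℝ}

lemma transpose_colSample_mul_apply (M : Matrix (Fin n) (Fin m) ℝ) (w : Fin t → Fin n) (l : Fin t)
    (a : Fin m) : ((colSample t q w)ᵀ * M) l a = (√(t * q (w l)))⁻¹ * M (w l) a := by
  simp [Matrix.mul_apply, colSample]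

lemma mul_colSample_apply_sq (hq : ∀ j, 0 ≤ q j) (M : Matrix (Fin m) (Fin n) ℝ)
    (w : Fin t → Fin n) (i : Fin m) (l : Fin t) :
    (M * colSample t q w) i l ^ 2 = (t : ℝ)⁻¹ * (M i (w l) ^ 2 / q (w l)) := by
  have apply_eq : (M * colSample t q w) i l = M i (w l) * (√(t * q (w l)))⁻¹ := by
    simp [Matrix.mul_apply, colSample]
  rw [apply_eq, mul_pow, inv_pow, Real.sq_sqrt (mul_nonneg t.cast_nonneg (hq _)), mul_inv]
  ring

/-- The rank-one summand `qᵢ⁻¹ Mᵢᵀ Mᵢ` that row `i` of `M` contributes when it is sampled with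
probability `qᵢ`; an unbiased estimator of `Mᵀ * M`. -/
noncomputable def rowOuter (q : Fin n → ℝ) (M : Matrix (Fin n) (Fin m) ℝ) (i : Fin n) :
    Matrix (Fin m) (Fin m) ℝ :=
  (q i)⁻¹ • Matrix.vecMulVec (M i) (M i)

lemma sum_smul_rowOuter (hq : ∀ j, 0 < q j) (M : Matrix (Fin n) (Fin m) ℝ) :
    ∑ i, q i • rowOuter q M i = Mᵀ * M := by
  ext a b
  simp [rowOuter, Matrix.sum_apply, Matrix.mul_apply, Matrix.vecMulVec_apply, (hq _).ne']

lemma gram_transpose_colSample_mul (hq : ∀ j, 0 ≤ q j) (M : Matrix (Fin n) (Fin m) ℝ)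
    (w : Fin t → Fin n) :
    ((colSample t q w)ᵀ * M)ᵀ * ((colSample t q w)ᵀ * M) =
      (t : ℝ)⁻¹ • ∑ l, rowOuter q M (w l) := by
  have weight_sq (l : Fin t) :
      (√(t * q (w l)))⁻¹ * (√(t * q (w l)))⁻¹ = (t : ℝ)⁻¹ * (q (w l))⁻¹ := by
    rw [← mul_inv, Real.mul_self_sqrt (mul_nonneg t.cast_nonneg (hq _)), mul_inv]
  ext a b
  rw [Matrix.mul_apply, Matrix.smul_apply, Matrix.sum_apply, smul_eq_mul, Finset.mul_sum]
  refine Finset.sum_congr rfl fun l _ => ?_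
  rw [Matrix.transpose_apply, transpose_colSample_mul_apply, transpose_colSample_mul_apply,
    mul_mul_mul_comm, weight_sq, rowOuter, Matrix.smul_apply, Matrix.vecMulVec_apply, smul_eq_mul,
    mul_assoc]

lemma norm_frobeniusVec_rowOuter (hq : ∀ j, 0 ≤ q j) (M : Matrix (Fin n) (Fin m) ℝ) (i : Fin n) :
    ‖frobeniusVec (rowOuter q M i)‖ = (∑ a, M i a ^ 2) / q i := by
  have norm_vecMulVec : ‖frobeniusVec (Matrix.vecMulVec (M i) (M i))‖ = ∑ a, M i a ^ 2 := by
    rw [← sq_eq_sq₀ (norm_nonneg _) (Finset.sum_nonneg fun _ _ => sq_nonneg _),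
      norm_frobeniusVec_sq, frobeniusSq_vecMulVec, sq]
  rw [rowOuter, map_smul, norm_smul, Real.norm_of_nonneg (inv_nonneg.2 (hq i)), norm_vecMulVec,
    div_eq_inv_mul]

lemma iidProb_four_mul_le_sum_mul_colSample_sq_le (ht : 0 < t) (hq₀ : ∀ j, 0 < q j)
    (hq₁ : ∑ j, q j = 1) {M : Matrix (Fin m) (Fin n) ℝ} {s : Finset (Fin m)} {L μ : ℝ} (hL : 0 < L)
    (hs : ∀ j, ∑ i ∈ s, M i j ^ 2 ≤ L * q j) (hμ : ∑ i ∈ s, ∑ j, M i j ^ 2 ≤ μ) :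
    iidProb q {w : Fin t → Fin n | 4 * μ ≤ ∑ i ∈ s, ∑ l, (M * colSample t q w) i l ^ 2} ≤
      Real.exp (-(2 * (t * μ / L))) := by
  have ht' : (0 : ℝ) < t := by exact_mod_cast ht
  have sum_eq (w : Fin t → Fin n) : ∑ i ∈ s, ∑ l, (M * colSample t q w) i l ^ 2 =
      (t : ℝ)⁻¹ * ∑ l, (∑ i ∈ s, M i (w l) ^ 2) / q (w l) := by
    simp only [mul_colSample_apply_sq fun j => (hq₀ j).le, Finset.mul_sum, Finset.sum_div]
    exact Finset.sum_comm
  have mean_le : ∑ j, q j * ((∑ i ∈ s, M i j ^ 2) / q j) ≤ μ := by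
    simp only [mul_div_cancel₀ _ (hq₀ _).ne']
    exact Finset.sum_comm.trans_le hμ
  refine (iidProb_mono (fun j => (hq₀ j).le) fun w hw => ?_).trans
    (iidProb_four_mul_le_sum_le (fun j => (hq₀ j).le) hq₁ hL
      (fun j => div_nonneg (Finset.sum_nonneg fun _ _ => sq_nonneg _) (hq₀ j).le)
      (fun j => (div_le_iff₀ (hq₀ j)).2 (hs j)) mean_le)
  rw [Set.mem_ofPred_eq, sum_eq, le_inv_mul_iff₀ ht'] at hw
  rwa [Set.mem_ofPred_eq, mul_left_comm]

lemma iidProb_not_loewnerBand_le (ht : 0 < t) (hq₀ : ∀ j, 0 < q j) (hq₁ : ∑ j, q j = 1)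
    {M : Matrix (Fin n) (Fin m) ℝ} {L F c r : ℝ} (hL : ∀ i, ∑ a, M i a ^ 2 ≤ L * q i)
    (hL₀ : 0 ≤ L) (hF : frobeniusSq M ≤ F) (hc : 0 ≤ c) (hcL : c * (2 * L) ≤ t) (hr : 0 ≤ r) :
    iidProb q {w : Fin t → Fin n | ¬ loewnerBand (Mᵀ * M)
        (((colSample t q w)ᵀ * M)ᵀ * ((colSample t q w)ᵀ * M)) r} ≤
      2 * Real.exp (c ^ 2 * (L * F) / t - c * r) := by
  have hq (j : Fin n) : 0 ≤ q j := (hq₀ j).le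
  have norm_le (i : Fin n) : ‖frobeniusVec (rowOuter q M i)‖ ≤ L := by
    rw [norm_frobeniusVec_rowOuter hq]
    exact (div_le_iff₀ (hq₀ i)).2 (hL i)
  have second_moment_le : ∑ i, q i * ‖frobeniusVec (rowOuter q M i)‖ ^ 2 ≤ L * F :=
    calc ∑ i, q i * ‖frobeniusVec (rowOuter q M i)‖ ^ 2
        ≤ ∑ i, q i * (L * ((∑ a, M i a ^ 2) / q i)) := by
          refine Finset.sum_le_sum fun i _ => mul_le_mul_of_nonneg_left ?_ (hq i)
          rw [sq, ← norm_frobeniusVec_rowOuter hq]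
          exact mul_le_mul_of_nonneg_right (norm_le i) (norm_nonneg _)
      _ = L * frobeniusSq M := by
          simp only [mul_left_comm _ L, mul_div_cancel₀ _ (hq₀ _).ne', ← Finset.mul_sum,
            frobeniusSq]
      _ ≤ L * F := by gcongr
  refine (iidProb_mono hq fun w hw => ?_).trans
    (iidProb_le_norm_average_sub_mean_le ht hq hq₁ norm_le second_moment_le hc hcL)
  contrapose! hw
  rw [Set.mem_ofPred_eq, not_le, ← map_sum] at hw
  simp only [← map_smul, ← map_sum, ← map_sub, sum_smul_rowOuter hq₀,
    ← gram_transpose_colSample_mul hq] at hw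
  rw [Set.mem_ofPred_eq, not_not]
  refine loewnerBand_of_frobeniusSq_sub_le (isHermitian_conjTranspose_mul_self M)
    (isHermitian_conjTranspose_mul_self _) hr ?_
  rw [← norm_frobeniusVec_sq]
  exact pow_le_pow_left₀ (norm_nonneg _) hw.le 2

end Sampling

section DiagonalSampling

variable {n t : ℕ} {q : Fin n → ℝ} {A : Matrix (Fin n) (Fin n) ℝ} {Φ r δ : ℝ}

lemma posSemidef_one_le_of_diag_le (hA : A.PosSemidef) (hA₀ : A ≠ 0) (hq₁ : ∑ j, q j = 1)
    (hdiag : ∀ i, A i i ≤ Φ * √(frobeniusSq A) * q i) : 1 ≤ Φ := by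
  have sqrt_pos : 0 < √(frobeniusSq A) := Real.sqrt_pos.2 (frobeniusSq_pos hA₀)
  refine le_of_mul_le_mul_right ?_ sqrt_pos
  calc 1 * √(frobeniusSq A) ≤ A.trace := by
        rw [one_mul]; exact posSemidef_sqrt_frobeniusSq_le_trace hA
    _ ≤ ∑ i, Φ * √(frobeniusSq A) * q i := Finset.sum_le_sum fun i _ => hdiag i
    _ = Φ * √(frobeniusSq A) := by rw [← Finset.mul_sum, hq₁, mul_one]

lemma posSemidef_sum_row_sq_le_of_diag_le (hA : A.PosSemidef)
    (hdiag : ∀ i, A i i ≤ Φ * √(frobeniusSq A) * q i) (i : Fin n) :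
    ∑ j, A i j ^ 2 ≤ Φ * frobeniusSq A * q i :=
  calc ∑ j, A i j ^ 2 ≤ √(frobeniusSq A) * A i i := posSemidef_sum_row_sq_le hA i
    _ ≤ √(frobeniusSq A) * (Φ * √(frobeniusSq A) * q i) :=
        mul_le_mul_of_nonneg_left (hdiag i) (Real.sqrt_nonneg _)
    _ = Φ * √(frobeniusSq A) ^ 2 * q i := by ring
    _ = Φ * frobeniusSq A * q i := by rw [Real.sq_sqrt (frobeniusSq_nonneg A)]

lemma posSemidef_apply_sq_le_of_diag_le (hA : A.PosSemidef)
    (hdiag : ∀ i, A i i ≤ Φ * √(frobeniusSq A) * q i) (i j : Fin n) :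
    A i j ^ 2 ≤ Φ ^ 2 * frobeniusSq A * q i * q j :=
  calc A i j ^ 2 ≤ A i i * A j j := posSemidef_apply_sq_le hA i j
    _ ≤ (Φ * √(frobeniusSq A) * q i) * (Φ * √(frobeniusSq A) * q j) :=
        mul_le_mul (hdiag i) (hdiag j) hA.diag_nonneg (hA.diag_nonneg.trans (hdiag i))
    _ = Φ ^ 2 * √(frobeniusSq A) ^ 2 * q i * q j := by ring
    _ = Φ ^ 2 * frobeniusSq A * q i * q j := by rw [Real.sq_sqrt (frobeniusSq_nonneg A)]

lemma iidProb_le_row_mul_colSample_le (ht : 0 < t) (hq₀ : ∀ j, 0 < q j) (hq₁ : ∑ j, q j = 1)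
    (hA : A.PosSemidef) (hA₀ : A ≠ 0) (hdiag : ∀ i, A i i ≤ Φ * √(frobeniusSq A) * q i)
    (i : Fin n) :
    iidProb q {w : Fin t → Fin n | 4 * (Φ * frobeniusSq A * q i) ≤
      ∑ l, (A * colSample t q w) i l ^ 2} ≤ Real.exp (-(2 * (t / Φ))) := by
  have hΦ : 0 < Φ := one_pos.trans_le (posSemidef_one_le_of_diag_le hA hA₀ hq₁ hdiag)
  have hF : 0 < frobeniusSq A := frobeniusSq_pos hA₀
  have hqi : 0 < q i := hq₀ i
  have chernoff := iidProb_four_mul_le_sum_mul_colSample_sq_le ht hq₀ hq₁ (M := A) (s := {i})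
    (L := Φ ^ 2 * frobeniusSq A * q i) (μ := Φ * frobeniusSq A * q i) (by positivity)
    (by simpa using posSemidef_apply_sq_le_of_diag_le hA hdiag i)
    (by simpa using posSemidef_sum_row_sq_le_of_diag_le hA hdiag i)
  have ratio_eq : t * (Φ * frobeniusSq A * q i) / (Φ ^ 2 * frobeniusSq A * q i) = t / Φ := by
    field_simp
  simpa only [Finset.sum_singleton, ratio_eq] using chernoff

lemma iidProb_le_frobeniusSq_mul_colSample_le (ht : 0 < t) (hq₀ : ∀ j, 0 < q j)
    (hq₁ : ∑ j, q j = 1) (hA : A.PosSemidef) (hA₀ : A ≠ 0)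
    (hdiag : ∀ i, A i i ≤ Φ * √(frobeniusSq A) * q i) :
    iidProb q {w : Fin t → Fin n | 4 * frobeniusSq A ≤ frobeniusSq (A * colSample t q w)} ≤
      Real.exp (-(2 * (t / Φ))) := by
  have hΦ : 0 < Φ := one_pos.trans_le (posSemidef_one_le_of_diag_le hA hA₀ hq₁ hdiag)
  have hF : 0 < frobeniusSq A := frobeniusSq_pos hA₀
  have column_le (j : Fin n) : ∑ i, A i j ^ 2 ≤ Φ * frobeniusSq A * q j := by
    simpa only [posSemidef_apply_comm hA _ j] using posSemidef_sum_row_sq_le_of_diag_le hA hdiag j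
  have chernoff := iidProb_four_mul_le_sum_mul_colSample_sq_le ht hq₀ hq₁ (by positivity)
    column_le (le_refl (frobeniusSq A))
  rwa [show t * frobeniusSq A / (Φ * frobeniusSq A) = t / Φ by field_simp] at chernoff

/-- The column samples `w` for which the rows of `A * colSample t q w` and the whole matrix have
squared norm at most four times an upper bound for their mean; on this event the row sampling
concentrates. -/
def boundedColSamples (t : ℕ) (q : Fin n → ℝ) (A : Matrix (Fin n) (Fin n) ℝ) (Φ : ℝ) :
    Set (Fin t → Fin n) :=
  {w | (∀ i, ∑ l, (A * colSample t q w) i l ^ 2 ≤ 4 * (Φ * frobeniusSq A * q i)) ∧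
    frobeniusSq (A * colSample t q w) ≤ 4 * frobeniusSq A}

lemma iidProb_compl_boundedColSamples_le (ht : 0 < t) (hq₀ : ∀ j, 0 < q j) (hq₁ : ∑ j, q j = 1)
    (hA : A.PosSemidef) (hA₀ : A ≠ 0) (hdiag : ∀ i, A i i ≤ Φ * √(frobeniusSq A) * q i) :
    iidProb q (boundedColSamples t q A Φ)ᶜ ≤ (n + 1) * Real.exp (-(2 * (t / Φ))) := by
  have hq (j : Fin n) : 0 ≤ q j := (hq₀ j).le
  let heavyRow (i : Fin n) : Set (Fin t → Fin n) :=
    {w | 4 * (Φ * frobeniusSq A * q i) ≤ ∑ l, (A * colSample t q w) i l ^ 2}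
  let heavy : Set (Fin t → Fin n) :=
    {w | 4 * frobeniusSq A ≤ frobeniusSq (A * colSample t q w)}
  have subset_union : (boundedColSamples t q A Φ)ᶜ ⊆ (⋃ i, heavyRow i) ∪ heavy := by
    intro w hw
    contrapose! hw
    simp only [Set.mem_union, Set.mem_iUnion, not_or, not_exists, heavyRow, heavy,
      Set.mem_ofPred_eq, not_le] at hw
    exact Set.notMem_compl_iff.2 ⟨fun i => (hw.1 i).le, hw.2.le⟩
  calc iidProb q (boundedColSamples t q A Φ)ᶜ
      ≤ ∑ i, iidProb q (heavyRow i) + iidProb q heavy :=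
        (iidProb_mono hq subset_union).trans ((iidProb_union_le hq _ _).trans
          (add_le_add_left (iidProb_iUnion_le hq _) _))
    _ ≤ ∑ _i : Fin n, Real.exp (-(2 * (t / Φ))) + Real.exp (-(2 * (t / Φ))) :=
        add_le_add
          (Finset.sum_le_sum fun i _ =>
            iidProb_le_row_mul_colSample_le ht hq₀ hq₁ hA hA₀ hdiag i)
          (iidProb_le_frobeniusSq_mul_colSample_le ht hq₀ hq₁ hA hA₀ hdiag)
    _ = (n + 1) * Real.exp (-(2 * (t / Φ))) := by simp [add_mul]

lemma iidProb_not_loewnerBand_le_of_boundedColSamples (hq₀ : ∀ j, 0 < q j) (hq₁ : ∑ j, q j = 1)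
    (hA₀ : A ≠ 0) (hΦ : 0 < Φ) (hr₀ : 0 < r) (hr₁ : r ≤ 1) {b : ℝ} (hb : 0 < b)
    (ht : 256 * Φ * b / r ^ 2 ≤ t) {v : Fin t → Fin n} (hv : v ∈ boundedColSamples t q A Φ) :
    iidProb q {w : Fin t → Fin n | ¬ loewnerBand
        ((A * colSample t q v)ᵀ * (A * colSample t q v))
        (((colSample t q w)ᵀ * (A * colSample t q v))ᵀ *
          ((colSample t q w)ᵀ * (A * colSample t q v))) (r * frobeniusSq A)} ≤
      2 * Real.exp (-(3 * b)) := by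
  have hF : 0 < frobeniusSq A := frobeniusSq_pos hA₀
  have ht₀ : (0 : ℝ) < t := lt_of_lt_of_le (by positivity) ht
  have ht' : 256 * Φ * b ≤ t * r ^ 2 := (div_le_iff₀ (by positivity)).1 ht
  set c := 4 * b / (r * frobeniusSq A) with hc
  have c_mul_le : c * (2 * (4 * (Φ * frobeniusSq A))) ≤ t :=
    calc c * (2 * (4 * (Φ * frobeniusSq A))) = 32 * Φ * b / r := by rw [hc]; field_simp; norm_num
      _ ≤ t := by
        rw [div_le_iff₀ hr₀]
        nlinarith [mul_pos hΦ hb, mul_nonneg ht₀.le (mul_nonneg hr₀.le (sub_nonneg.2 hr₁))]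
  have exponent_le : c ^ 2 * (4 * (Φ * frobeniusSq A) * (4 * frobeniusSq A)) / t -
      c * (r * frobeniusSq A) ≤ -(3 * b) :=
    calc c ^ 2 * (4 * (Φ * frobeniusSq A) * (4 * frobeniusSq A)) / t - c * (r * frobeniusSq A)
        = b * (256 * Φ * b / (t * r ^ 2)) - 4 * b := by rw [hc]; field_simp; ring
      _ ≤ b * 1 - 4 * b := by
          gcongr
          exact div_le_one_of_le₀ ht' (by positivity)
      _ = -(3 * b) := by ring
  refine (iidProb_not_loewnerBand_le (Nat.cast_pos.1 ht₀) hq₀ hq₁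
    (fun i => by simpa only [mul_assoc] using hv.1 i) (by positivity) hv.2 (by positivity)
    c_mul_le (by positivity)).trans ?_
  gcongr

lemma colSample_mul_transpose_of_fin_one (ht : 0 < t) {q : Fin 1 → ℝ} (hq₁ : ∑ j, q j = 1)
    (w : Fin t → Fin 1) : colSample t q w * (colSample t q w)ᵀ = 1 := by
  have ht' : (t : ℝ) ≠ 0 := by exact_mod_cast ht.ne'
  have hq : q 0 = 1 := by simpa using hq₁
  ext i j
  simp [Subsingleton.elim _ (0 : Fin 1), Matrix.one_apply, Matrix.mul_apply, colSample, hq,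
    ← mul_inv, ht']

lemma loewnerBand_of_fin_one (ht : 0 < t) {q : Fin 1 → ℝ} (hq₁ : ∑ j, q j = 1)
    {m : ℕ} (M : Matrix (Fin 1) (Fin m) ℝ) (hr : 0 ≤ r) (w : Fin t → Fin 1) :
    loewnerBand (Mᵀ * M) (((colSample t q w)ᵀ * M)ᵀ * ((colSample t q w)ᵀ * M)) r := by
  have gram_eq : ((colSample t q w)ᵀ * M)ᵀ * ((colSample t q w)ᵀ * M) = Mᵀ * M := by
    rw [Matrix.transpose_mul, Matrix.transpose_transpose, Matrix.mul_assoc,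
      ← Matrix.mul_assoc _ _ M, colSample_mul_transpose_of_fin_one ht hq₁, Matrix.one_mul]
  rw [gram_eq]
  exact loewnerBand_of_frobeniusSq_sub_le (isHermitian_conjTranspose_mul_self M)
    (isHermitian_conjTranspose_mul_self M) hr (by simpa [frobeniusSq] using sq_nonneg r)

lemma add_three_mul_exp_neg_three_mul_log_le (hn : 2 ≤ n) (hδ₀ : 0 < δ) (hδ₁ : δ ≤ 1) :
    (n + 3) * Real.exp (-(3 * Real.log (n / δ))) ≤ δ := by
  have hn' : (2 : ℝ) ≤ n := by exact_mod_cast hn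
  have exp_eq : Real.exp (-(3 * Real.log (n / δ))) = (δ / n) ^ 3 := by
    rw [show -(3 * Real.log (n / δ)) = (3 : ℕ) * Real.log (δ / n) by
      rw [← inv_div δ, Real.log_inv]; push_cast; ring, Real.exp_nat_mul,
      Real.exp_log (by positivity)]
  have cubic : (n : ℝ) + 3 ≤ n ^ 3 := by
    nlinarith [mul_nonneg (sub_nonneg.2 hn') (sub_nonneg.2 hn')]
  calc (n + 3) * Real.exp (-(3 * Real.log (n / δ))) = (n + 3) / n ^ 3 * δ ^ 3 := by
        rw [exp_eq, div_pow]; ring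
    _ ≤ 1 * δ ^ 3 := by
        gcongr
        exact div_le_one_of_le₀ cubic (by positivity)
    _ ≤ δ := by
        rw [one_mul]
        exact pow_le_of_le_one hδ₀.le hδ₁ three_ne_zero

lemma one_sub_le_iidProb2_loewnerBand (hq₀ : ∀ j, 0 < q j) (hq₁ : ∑ j, q j = 1)
    (hA : A.PosSemidef) (hA₀ : A ≠ 0) (hdiag : ∀ i, A i i ≤ Φ * √(frobeniusSq A) * q i)
    (hr₀ : 0 < r) (hr₁ : r ≤ 1) (hδ₀ : 0 < δ) (hδ₁ : δ < 1)
    (ht : 256 * Φ * Real.log (n / δ) / r ^ 2 ≤ t) :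
    1 - δ ≤ iidProb2 t q q {w : (Fin t → Fin n) × (Fin t → Fin n) |
      loewnerBand ((A * colSample t q w.1)ᵀ * (A * colSample t q w.1))
        (((colSample t q w.2)ᵀ * (A * colSample t q w.1))ᵀ *
          ((colSample t q w.2)ᵀ * (A * colSample t q w.1))) (r * frobeniusSq A)} := by
  have hΦ : 1 ≤ Φ := posSemidef_one_le_of_diag_le hA hA₀ hq₁ hdiag
  have hn : 1 ≤ n := Nat.one_le_iff_ne_zero.2 fun h => by subst h; simp at hq₁
  have hlog : 0 < Real.log (n / δ) :=
    Real.log_pos ((one_lt_div hδ₀).2 (hδ₁.trans_le (by exact_mod_cast hn)))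
  have ht₀ : (0 : ℝ) < t := lt_of_lt_of_le (by positivity) ht
  -- For `n = 1` the total failure bound `(n + 3) (δ / n) ^ 3` can exceed `δ`, but then the two Gram
  -- matrices coincide.
  rcases hn.eq_or_lt with rfl | hn₂
  · have band (w : (Fin t → Fin 1) × (Fin t → Fin 1)) :=
      loewnerBand_of_fin_one (Nat.cast_pos.1 ht₀) hq₁ (A * colSample t q w.1)
        (mul_nonneg hr₀.le (frobeniusSq_nonneg A)) w.2
    refine (sub_le_self 1 hδ₀.le).trans_eq ?_
    rw [← iidProb2_univ hq₁ hq₁]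
    exact congrArg _ (Set.eq_univ_of_forall band).symm
  have hq (j : Fin n) : 0 ≤ q j := (hq₀ j).le
  have three_log_le : 3 * Real.log (n / δ) ≤ 2 * (t / Φ) := by
    have ht' : 256 * Φ * Real.log (n / δ) ≤ t :=
      (le_div_self (by positivity) (by positivity) (pow_le_one₀ hr₀.le hr₁)).trans ht
    have := (le_div_iff₀ (one_pos.trans_le hΦ)).2 ((mul_right_comm _ _ _).trans_le ht')
    linarith
  have column_failure_le : iidProb q (boundedColSamples t q A Φ)ᶜ ≤
      (n + 1) * Real.exp (-(3 * Real.log (n / δ))) :=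
    (iidProb_compl_boundedColSamples_le (Nat.cast_pos.1 ht₀) hq₀ hq₁ hA hA₀ hdiag).trans
      (by gcongr)
  have total_failure_le := add_three_mul_exp_neg_three_mul_log_le hn₂ hδ₀ hδ₁.le
  refine le_trans ?_ (one_sub_sub_le_iidProb2 hq hq₁ hq hq₁ (by positivity) column_failure_le
    fun v hv => iidProb_not_loewnerBand_le_of_boundedColSamples hq₀ hq₁ hA₀ (by positivity)
      hr₀ hr₁ hlog ht hv)
  linarith

end DiagonalSampling

section Perturbation

variable {n : ℕ}

lemma trace_le_sqrt_mul_sqrt_frobeniusSq (M : Matrix (Fin n) (Fin n) ℝ) :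
    M.trace ≤ √n * √(frobeniusSq M) := by
  rw [← Real.sqrt_mul n.cast_nonneg]
  refine Real.le_sqrt_of_sq_le ?_
  calc M.trace ^ 2 ≤ n * ∑ i, M i i ^ 2 := by
        simpa [Matrix.trace] using sq_sum_le_card_mul_sum_sq (s := Finset.univ) (f := M.diag)
    _ ≤ n * frobeniusSq M := by
        refine mul_le_mul_of_nonneg_left (Finset.sum_le_sum fun i _ => ?_) n.cast_nonneg
        exact Finset.single_le_sum (f := fun j => M i j ^ 2) (fun _ _ => sq_nonneg _)
          (Finset.mem_univ i)

variable {A N : Matrix (Fin n) (Fin n) ℝ}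

lemma trace_add_le_of_frobeniusSq_le (hN : frobeniusSq N ≤ frobeniusSq A) :
    (A + N).trace ≤ 2 * √n * √(frobeniusSq A) :=
  calc (A + N).trace ≤ √n * √(frobeniusSq A) + √n * √(frobeniusSq N) := by
        rw [Matrix.trace_add]
        exact add_le_add (trace_le_sqrt_mul_sqrt_frobeniusSq A)
          (trace_le_sqrt_mul_sqrt_frobeniusSq N)
    _ ≤ √n * √(frobeniusSq A) + √n * √(frobeniusSq A) := by gcongr
    _ = 2 * √n * √(frobeniusSq A) := by ring

lemma diag_le_of_frobeniusSq_le {φ : ℝ} (hA : A.PosSemidef)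
    (hN : frobeniusSq N ≤ frobeniusSq A) (hAN : ∀ j, 0 < (A + N) j j)
    (hφ : ∀ j, A j j / (A + N) j j ≤ φ) (i : Fin n) :
    A i i ≤ 2 * φ * √n * √(frobeniusSq A) * ((A + N) i i / (A + N).trace) := by
  have trace_pos : 0 < (A + N).trace := Finset.sum_pos (fun j _ => hAN j) ⟨i, Finset.mem_univ i⟩
  have hφ₀ : 0 ≤ φ := (div_nonneg hA.diag_nonneg (hAN i).le).trans (hφ i)
  have hi := hAN i
  calc A i i ≤ φ * (A + N) i i := (div_le_iff₀ (hAN i)).1 (hφ i)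
    _ = φ * (A + N).trace * ((A + N) i i / (A + N).trace) := by field_simp
    _ ≤ φ * (2 * √n * √(frobeniusSq A)) * ((A + N) i i / (A + N).trace) := by
        gcongr
        exact trace_add_le_of_frobeniusSq_le hN
    _ = 2 * φ * √n * √(frobeniusSq A) * ((A + N) i i / (A + N).trace) := by ring

lemma ne_zero_of_frobeniusSq_le {i j : Fin n} (hN : frobeniusSq N ≤ frobeniusSq A)
    (hAN : (A + N) i j ≠ 0) : A ≠ 0 := by
  rintro rfl
  have hN₀ : N = 0 := frobeniusSq_eq_zero_iff.1
    (le_antisymm (hN.trans_eq (frobeniusSq_eq_zero_iff.2 rfl)) (frobeniusSq_nonneg N))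
  simp [hN₀] at hAN

end Perturbation

theorem robust_spectral_bound_row_general {n : ℕ} (hn : 0 < n) {A N : Matrix (Fin n) (Fin n) ℝ}
    {q : Fin n → ℝ} {ε δ φ : ℝ} {k t : ℕ} (hA : A.PosSemidef)
    (hN : frobeniusSq N ≤ frobeniusSq A) (hAN : ∀ j, 0 < (A + N) j j)
    (hq : ∀ j, q j = (A + N) j j / (A + N).trace) (hφ : ∀ j, A j j / (A + N) j j ≤ φ)
    (hε₀ : 0 < ε) (hε₁ : ε < 1) (hδ₀ : 0 < δ) (hδ₁ : δ < 1) (hk : 1 ≤ k)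
    (ht : 512 * φ * √n * (k : ℝ) ^ 2 * Real.log (n / δ) / ε ^ 2 ≤ t) :
    1 - δ ≤ iidProb2 t q q {w : (Fin t → Fin n) × (Fin t → Fin n) |
      loewnerBand ((A * colSample t q w.1)ᵀ * (A * colSample t q w.1))
        (((colSample t q w.2)ᵀ * A * colSample t q w.1)ᵀ *
          ((colSample t q w.2)ᵀ * A * colSample t q w.1)) ((ε / k) * frobeniusSq A)} := by
  have hk' : (1 : ℝ) ≤ k := by exact_mod_cast hk
  have trace_pos : 0 < (A + N).trace :=
    Finset.sum_pos (fun j _ => hAN j) ⟨⟨0, hn⟩, Finset.mem_univ _⟩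
  have hq₀ (j : Fin n) : 0 < q j := hq j ▸ div_pos (hAN j) trace_pos
  have hq₁ : ∑ j, q j = 1 := by
    simp only [hq, ← Finset.sum_div]
    exact div_self trace_pos.ne'
  have hA₀ : A ≠ 0 := ne_zero_of_frobeniusSq_le hN (hAN ⟨0, hn⟩).ne'
  have hdiag (i : Fin n) : A i i ≤ 2 * φ * √n * √(frobeniusSq A) * q i :=
    hq i ▸ diag_le_of_frobeniusSq_le hA hN hAN hφ i
  have sample_size_eq : 256 * (2 * φ * √n) * Real.log (n / δ) / (ε / k) ^ 2 =
      512 * φ * √n * (k : ℝ) ^ 2 * Real.log (n / δ) / ε ^ 2 := by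
    field_simp
    ring
  simp only [Matrix.mul_assoc]
  exact one_sub_le_iidProb2_loewnerBand hq₀ hq₁ hA hA₀ hdiag (by positivity)
    (div_le_one_of_le₀ (hε₁.le.trans hk') (by positivity)) hδ₀ hδ₁ (sample_size_eq.trans_le ht)

/-- Robust spectral bound for the row sample: with two independent diagonal samplings
(columns then rows), (SAT)ᵀ(SAT) ≈ (AT)ᵀ(AT) up to ±(ε/k)‖A‖_F²·I in the Loewner order,
with probability at least 1−δ. -/
theorem robust_spectral_bound_row :
    ∃ c₀ : ℝ, 0 < c₀ ∧
      ∀ (n : ℕ) (A N : Matrix (Fin n) (Fin n) ℝ) (η ε δ φ : ℝ) (k t : ℕ),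
        A.PosSemidef →
        0 < η → η ≤ 1 →
        frobeniusSq N ≤ η * frobeniusSq A →
        (∀ j, (∑ i, (N i j)^2) ≤ ∑ i, (A i j)^2) →
        (∀ j, 0 < (A + N) j j) →
        IsGreatest (Set.range fun j => A j j / (A + N) j j) φ →
        0 < ε → ε < 1 → 0 < δ → δ < 1 → 1 ≤ k →
        c₀ * φ * Real.sqrt n * (k : ℝ)^2 * Real.log ((n : ℝ) / δ) / ε^2 ≤ (t : ℝ) →
        1 - δ ≤
          iidProb2 t (fun j => (A + N) j j / (A + N).trace)
              (fun j => (A + N) j j / (A + N).trace)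
            {w : (Fin t → Fin n) × (Fin t → Fin n) |
              loewnerBand
                ((A * colSample t (fun j => (A + N) j j / (A + N).trace) w.1)ᵀ *
                  (A * colSample t (fun j => (A + N) j j / (A + N).trace) w.1))
                (((colSample t (fun j => (A + N) j j / (A + N).trace) w.2)ᵀ * A *
                    colSample t (fun j => (A + N) j j / (A + N).trace) w.1)ᵀ *
                  ((colSample t (fun j => (A + N) j j / (A + N).trace) w.2)ᵀ * A *
                    colSample t (fun j => (A + N) j j / (A + N).trace) w.1))
                ((ε / k) * frobeniusSq A)} := by
  refine ⟨512, by norm_num, fun n A N η ε δ φ k t hA _ hη hN _ hAN hφ => ?_⟩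
  exact robust_spectral_bound_row_general (Fin.pos hφ.1.choose) hA
    (hN.trans (mul_le_of_le_one_left (frobeniusSq_nonneg A) hη)) hAN (fun _ => rfl)
    fun j => hφ.2 ⟨j, rfl⟩
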